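/- arXiv:2306.15762 — 3 statements merged into one kernel-verified Lean document; each statement's English description precedes it below -/
import Mathlib

section
/- Let ν be a finite Borel measure on ℝ³ × S² with total mass A = ν(ℝ³ × S²), let M, k ≥ 0, and let u : ℝ³ × S² → ℝ satisfy |u(y,m)| ≤ M for all (y,m) and |u(y,m) − u(y′,m′)| ≤ k·(‖y − y′‖ + ‖m − m′‖) for all arguments. Let (c,n₀) ∈ ℝ³ × S², let κ ≥ 0, η ≥ 0, and θ ∈ (0, π/2]. Assume: (i) ν is supported in {(y,m) : ‖y − c‖ ≤ (κ+1)·η and ‖m − n₀‖ ≤ 6√2·κ·η/sin θ}; (ii) a ≥ 0 with |a − A| ≤ 3·A·κ·η. Then |∫ u dν − a·u(c,n₀)| ≤ 10·A·((κ+1)/sin θ)·(k + M)·η. -/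
open MeasureTheory

local notation "E3" => EuclideanSpace ℝ (Fin 3)
local notation "S2" => Metric.sphere (0 : EuclideanSpace ℝ (Fin 3)) 1

/-!
Write `A` for the mass of `ν` and compare both terms with `A • u (c, n₀)`. On the support of `ν` the
function `u` differs from `u (c, n₀)` by at most `k` times the sum of the two radii, so replacing
`∫ u` by `A • u (c, n₀)` costs at most `A * k` times that sum, and replacing `A` by `a` costs at
most `|a - A| * M`. The radii add up to at most `(1 + 6√2) ((κ + 1) / sin θ) η`, and
`1 + 6√2 ≤ 10`.
-/

section Measure

variable {α F : Type*} [MeasurableSpace α] [NormedAddCommGroup F]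
  {μ : Measure α} [IsFiniteMeasure μ] {f : α → F} {b : F} {C : ℝ}

theorem integrable_of_ae_norm_sub_const_le (hf : AEStronglyMeasurable f μ)
    (hfb : ∀ᵐ x ∂μ, ‖f x - b‖ ≤ C) : Integrable f μ := by
  refine .of_bound hf (C + ‖b‖) ?_
  filter_upwards [hfb] with x hx
  exact (norm_le_norm_sub_add (f x) b).trans (by gcongr)

theorem norm_integral_sub_smul_le_of_ae_norm_sub_const_le [NormedSpace ℝ F] [CompleteSpace F]
    (hf : AEStronglyMeasurable f μ) (hfb : ∀ᵐ x ∂μ, ‖f x - b‖ ≤ C) (a : ℝ) :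
    ‖∫ x, f x ∂μ - a • b‖ ≤ C * μ.real Set.univ + |a - μ.real Set.univ| * ‖b‖ := by
  have hint : Integrable f μ := integrable_of_ae_norm_sub_const_le hf hfb
  have hosc : ‖∫ x, f x ∂μ - μ.real Set.univ • b‖ ≤ C * μ.real Set.univ := by
    simpa only [integral_sub hint (integrable_const b), integral_const] using
      norm_integral_le_of_norm_le_const hfb
  have hmass : ‖μ.real Set.univ • b - a • b‖ = |a - μ.real Set.univ| * ‖b‖ := by
    rw [← sub_smul, norm_smul, Real.norm_eq_abs, abs_sub_comm]
  exact (norm_sub_le_norm_sub_add_norm_sub _ _ _).trans (add_le_add hosc hmass.le)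

end Measure

theorem lipschitzWith_of_dist_le_mul_dist_fst_add_dist_snd {X Y Z : Type*} [PseudoMetricSpace X]
    [PseudoMetricSpace Y] [PseudoMetricSpace Z] {f : X × Y → Z} {k : ℝ} (hk : 0 ≤ k)
    (hf : ∀ p q, dist (f p) (f q) ≤ k * (dist p.1 q.1 + dist p.2 q.2)) :
    LipschitzWith (k * 2).toNNReal f :=
  .of_dist_le' fun p q ↦ calc
    dist (f p) (f q) ≤ k * (dist p.1 q.1 + dist p.2 q.2) := hf p q
    _ ≤ k * (dist p q + dist p q) := by
      gcongr
      · exact le_max_left _ _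
      · exact le_max_right _ _
    _ = k * 2 * dist p q := by ring

section Constants

variable {κ η s : ℝ}

theorem add_six_mul_sqrt_two_mul_div_le (hκ : 0 ≤ κ) (hη : 0 ≤ η) (hs₀ : 0 < s) (hs₁ : s ≤ 1) :
    (κ + 1) * η + 6 * √2 * κ * η / s ≤ 10 * ((κ + 1) / s) * η := by
  have hsqrt : √2 ≤ 3 / 2 := Real.sqrt_le_iff.2 (by norm_num)
  have hcoef : 6 * √2 ≤ 9 := by linarith
  calc (κ + 1) * η + 6 * √2 * κ * η / s
      ≤ (κ + 1) * η / s + 9 * (κ + 1) * η / s := by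
        gcongr
        · exact le_div_self (by positivity) hs₀ hs₁
        · linarith
    _ = 10 * ((κ + 1) / s) * η := by ring

theorem three_mul_mul_le_ten_mul_div (hκ : 0 ≤ κ) (hη : 0 ≤ η) (hs₀ : 0 < s) (hs₁ : s ≤ 1) :
    3 * κ * η ≤ 10 * ((κ + 1) / s) * η := by
  gcongr
  · norm_num
  · exact (le_add_of_nonneg_right zero_le_one).trans (le_div_self (by positivity) hs₀ hs₁)

end Constants

theorem statement1_general {X Y F : Type*} [PseudoMetricSpace X] [MeasurableSpace X]
    [PseudoMetricSpace Y] [MeasurableSpace Y] [NormedAddCommGroup F] [NormedSpace ℝ F]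
    [CompleteSpace F] {ν : Measure (X × Y)} [IsFiniteMeasure ν] {u : X × Y → F} {c : X} {n₀ : Y}
    {M k κ η θ a : ℝ} (hk : 0 ≤ k) (hκ : 0 ≤ κ) (hη : 0 ≤ η) (hθ : θ ∈ Set.Ioo 0 Real.pi)
    (hu : AEStronglyMeasurable u ν) (hu₀ : ‖u (c, n₀)‖ ≤ M)
    (hul : ∀ p, ‖u p - u (c, n₀)‖ ≤ k * (dist p.1 c + dist p.2 n₀))
    (hsupp : ∀ᵐ p ∂ν, dist p.1 c ≤ (κ + 1) * η ∧
      dist p.2 n₀ ≤ 6 * √2 * κ * η / Real.sin θ)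
    (haA : |a - ν.real Set.univ| ≤ 3 * ν.real Set.univ * κ * η) :
    ‖∫ p, u p ∂ν - a • u (c, n₀)‖ ≤
      10 * ν.real Set.univ * ((κ + 1) / Real.sin θ) * (k + M) * η := by
  have hsin₀ : 0 < Real.sin θ := Real.sin_pos_of_mem_Ioo hθ
  have hsin₁ : Real.sin θ ≤ 1 := Real.sin_le_one θ
  set A := ν.real Set.univ
  set R := 10 * ((κ + 1) / Real.sin θ) * η with hR
  have hosc : ∀ᵐ p ∂ν, ‖u p - u (c, n₀)‖ ≤ k * R := by
    filter_upwards [hsupp] with p ⟨hp₁, hp₂⟩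
    exact (hul p).trans <| mul_le_mul_of_nonneg_left
      ((add_le_add hp₁ hp₂).trans (add_six_mul_sqrt_two_mul_div_le hκ hη hsin₀ hsin₁)) hk
  have hmass : |a - A| ≤ A * R := calc
    |a - A| ≤ A * (3 * κ * η) := haA.trans_eq (by ring)
    _ ≤ A * R := mul_le_mul_of_nonneg_left
      (three_mul_mul_le_ten_mul_div hκ hη hsin₀ hsin₁) measureReal_nonneg
  calc ‖∫ p, u p ∂ν - a • u (c, n₀)‖
      ≤ k * R * A + |a - A| * ‖u (c, n₀)‖ :=
        norm_integral_sub_smul_le_of_ae_norm_sub_const_le hu hosc a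
    _ ≤ k * R * A + A * R * M := by gcongr
    _ = 10 * A * ((κ + 1) / Real.sin θ) * (k + M) * η := by rw [hR]; ring

/-- Per-face estimate with explicit constant 10: `ν` plays the role of the varifold of the
curved patch `Δ` (total mass `A = ν(ℝ³ × S²)` its area), `a • δ_{(c,n₀)}` that of the
discrete varifold of the inscribed triangle, `η` the greatest edge length, `θ` the smallest
angle, `κ` the greatest principal curvature. -/
theorem statement1
    (ν : Measure (E3 × S2)) [IsFiniteMeasure ν]
    (M k : ℝ) (hM : 0 ≤ M) (hk : 0 ≤ k)
    (u : E3 × S2 → ℝ)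
    (hub : ∀ p : E3 × S2, |u p| ≤ M)
    (hul : ∀ p q : E3 × S2,
      |u p - u q| ≤ k * (‖p.1 - q.1‖ + ‖(p.2 : E3) - (q.2 : E3)‖))
    (c : E3) (n₀ : S2) (κ η θ a : ℝ)
    (hκ : 0 ≤ κ) (hη : 0 ≤ η) (hθ : θ ∈ Set.Ioc (0 : ℝ) (Real.pi / 2))
    (hsupp : ν {p : E3 × S2 |
      ¬ (‖p.1 - c‖ ≤ (κ + 1) * η ∧
          ‖(p.2 : E3) - (n₀ : E3)‖ ≤ 6 * Real.sqrt 2 * κ * η / Real.sin θ)} = 0)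
    (ha : 0 ≤ a)
    (haA : |a - (ν Set.univ).toReal| ≤ 3 * (ν Set.univ).toReal * κ * η) :
    |(∫ p, u p ∂ν) - a * u (c, n₀)| ≤
      10 * (ν Set.univ).toReal * ((κ + 1) / Real.sin θ) * (k + M) * η := by
  have hcont : Continuous u :=
    (lipschitzWith_of_dist_le_mul_dist_fst_add_dist_snd hk fun p q ↦ by
      simpa only [Subtype.dist_eq, dist_eq_norm, Real.norm_eq_abs] using hul p q).continuous
  exact statement1_general hk hκ hη ⟨hθ.1, hθ.2.trans_lt (half_lt_self Real.pi_pos)⟩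
    hcont.aestronglyMeasurable (hub _)
    (fun p ↦ by simpa only [Subtype.dist_eq, dist_eq_norm, Real.norm_eq_abs] using hul p (c, n₀))
    (by simpa only [ae_iff, Subtype.dist_eq, dist_eq_norm] using hsupp) haA
end

section
/- Let I be a finite index set. For each i ∈ I let ν_i be a finite Borel measure on ℝ³ × S² with total mass A_i, let (c_i, n_i) ∈ ℝ³ × S², and let a_i ≥ 0. Let M, k ≥ 0 and let u : ℝ³ × S² → ℝ satisfy |u| ≤ M everywhere and |u(y,m) − u(y′,m′)| ≤ k·(‖y − y′‖ + ‖m − m′‖). Let κ ≥ 0, η ≥ 0, θ ∈ (0, π/2], and assume for every i ∈ I: (i) ν_i is supported in {(y,m) : ‖y − c_i‖ ≤ (κ+1)·η and ‖m − n_i‖ ≤ 6√2·κ·η/sin θ}; (ii) |a_i − A_i| ≤ 3·A_i·κ·η. Set a(S) = Σ_{i∈I} A_i. Then |Σ_{i∈I} ∫ u dν_i − Σ_{i∈I} a_i·u(c_i, n_i)| ≤ 10·a(S)·((κ+1)/sin θ)·(k + M)·η. -/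
open MeasureTheory

local notation "E3" => EuclideanSpace ℝ (Fin 3)
local notation "S2" => Metric.sphere (0 : EuclideanSpace ℝ (Fin 3)) 1

/-!
On each patch `u` differs from its value at the atom by at most `k` times the sum of the two radii
of the support, so replacing `u` by that value costs at most this times the patch area; replacing
the patch area by the face area then costs at most the area defect times `M`. Both errors are
proportional to the patch area, hence add up to a multiple of the total area. The constant `10`
comes from `6√2 ≤ 9`, the remaining `1` paying for the spatial radius, and from `sin θ ≤ 1`.
-/

theorem continuous_of_dist_le_mul_dist_add_dist {X Y Z : Type*} [PseudoMetricSpace X]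
    [PseudoMetricSpace Y] [PseudoMetricSpace Z] {f : X × Y → Z} {k : ℝ} (hk : 0 ≤ k)
    (hf : ∀ p q, dist (f p) (f q) ≤ k * (dist p.1 q.1 + dist p.2 q.2)) : Continuous f := by
  refine (LipschitzWith.of_dist_le' (K := k * 2) fun p q => ?_).continuous
  calc dist (f p) (f q) ≤ k * (dist p.1 q.1 + dist p.2 q.2) := hf p q
    _ ≤ k * (dist p q + dist p q) := by
        gcongr
        exacts [le_max_left _ _, le_max_right _ _]
    _ = k * 2 * dist p q := by ring

section Quantization

variable {Ω F : Type*} [MeasurableSpace Ω] [NormedAddCommGroup F] [NormedSpace ℝ F]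
  [CompleteSpace F] {u : Ω → F}

theorem norm_integral_sub_real_univ_smul_le {μ : Measure Ω} [IsFiniteMeasure μ]
    (hu : AEStronglyMeasurable u μ) {w : F} {L : ℝ} (hL : ∀ᵐ p ∂μ, ‖u p - w‖ ≤ L) :
    ‖(∫ p, u p ∂μ) - μ.real Set.univ • w‖ ≤ L * μ.real Set.univ := by
  have hint_sub : Integrable (fun p => u p - w) μ :=
    .of_bound (hu.sub aestronglyMeasurable_const) L hL
  have hint : Integrable u μ := by
    simpa only [Pi.add_def, sub_add_cancel] using hint_sub.add (integrable_const w)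
  rw [← integral_const, ← integral_sub hint (integrable_const w)]
  exact norm_integral_le_of_norm_le_const hL

theorem norm_integral_sub_smul_le {μ : Measure Ω} [IsFiniteMeasure μ]
    (hu : AEStronglyMeasurable u μ) {w : F} {a L : ℝ} (hL : ∀ᵐ p ∂μ, ‖u p - w‖ ≤ L) :
    ‖(∫ p, u p ∂μ) - a • w‖ ≤ L * μ.real Set.univ + |a - μ.real Set.univ| * ‖w‖ := by
  have hsplit : (∫ p, u p ∂μ) - a • w =
      ((∫ p, u p ∂μ) - μ.real Set.univ • w) - (a - μ.real Set.univ) • w := by module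
  rw [hsplit, ← Real.norm_eq_abs, ← norm_smul]
  exact (norm_sub_le _ _).trans (by gcongr; exact norm_integral_sub_real_univ_smul_le hu hL)

theorem norm_sum_integral_sub_sum_smul_le {ι : Type*} (s : Finset ι) {ν : ι → Measure Ω}
    [∀ i, IsFiniteMeasure (ν i)] {w : ι → F} {a : ι → ℝ} {L ε M : ℝ}
    (hu : ∀ i ∈ s, AEStronglyMeasurable u (ν i))
    (hL : ∀ i ∈ s, ∀ᵐ p ∂(ν i), ‖u p - w i‖ ≤ L) (hM : ∀ i ∈ s, ‖w i‖ ≤ M)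
    (ha : ∀ i ∈ s, |a i - (ν i).real Set.univ| ≤ ε * (ν i).real Set.univ) :
    ‖(∑ i ∈ s, ∫ p, u p ∂(ν i)) - ∑ i ∈ s, a i • w i‖ ≤
      (L + ε * M) * ∑ i ∈ s, (ν i).real Set.univ := by
  rw [← Finset.sum_sub_distrib, Finset.mul_sum]
  refine norm_sum_le_of_le s fun i hi => ?_
  have hdefect : |a i - (ν i).real Set.univ| * ‖w i‖ ≤ ε * (ν i).real Set.univ * M :=
    mul_le_mul (ha i hi) (hM i hi) (norm_nonneg _) ((abs_nonneg _).trans (ha i hi))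
  calc ‖(∫ p, u p ∂(ν i)) - a i • w i‖
      ≤ L * (ν i).real Set.univ + |a i - (ν i).real Set.univ| * ‖w i‖ :=
        norm_integral_sub_smul_le (hu i hi) (hL i hi)
    _ ≤ L * (ν i).real Set.univ + ε * (ν i).real Set.univ * M := by gcongr
    _ = (L + ε * M) * (ν i).real Set.univ := by ring

end Quantization

theorem add_one_add_six_mul_sqrt_two_mul_div_le {κ s : ℝ} (hκ : 0 ≤ κ) (hs : 0 < s) (hs' : s ≤ 1) :
    κ + 1 + 6 * √2 * κ / s ≤ 10 * ((κ + 1) / s) := by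
  have hsqrt : 6 * √2 ≤ 9 := by
    linarith [Real.sqrt_le_iff.mpr (by norm_num : (0 : ℝ) ≤ 3 / 2 ∧ (2 : ℝ) ≤ (3 / 2) ^ 2)]
  calc κ + 1 + 6 * √2 * κ / s ≤ (κ + 1) / s + 9 * (κ + 1) / s := by
        gcongr
        · exact le_div_self (by positivity) hs hs'
        · linarith
    _ = 10 * ((κ + 1) / s) := by ring

theorem statement2_general
    {I X Y F : Type*} [Fintype I] [PseudoMetricSpace X] [PseudoMetricSpace Y]
    [MeasurableSpace X] [MeasurableSpace Y]
    [NormedAddCommGroup F] [NormedSpace ℝ F] [CompleteSpace F]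
    {ν : I → Measure (X × Y)} [∀ i, IsFiniteMeasure (ν i)]
    {c : I → X} {n : I → Y} {a : I → ℝ} {u : X × Y → F} {M k κ η θ : ℝ}
    (hu : ∀ i, AEStronglyMeasurable u (ν i)) (hub : ∀ i, ‖u (c i, n i)‖ ≤ M) (hk : 0 ≤ k)
    (hul : ∀ p i, ‖u p - u (c i, n i)‖ ≤ k * (dist p.1 (c i) + dist p.2 (n i)))
    (hκ : 0 ≤ κ) (hη : 0 ≤ η) (hθ : 0 < Real.sin θ)
    (hsupp : ∀ i, ∀ᵐ p ∂(ν i),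
      dist p.1 (c i) ≤ (κ + 1) * η ∧ dist p.2 (n i) ≤ 6 * √2 * κ * η / Real.sin θ)
    (haA : ∀ i, |a i - (ν i).real Set.univ| ≤ 3 * (ν i).real Set.univ * κ * η) :
    ‖(∑ i, ∫ p, u p ∂(ν i)) - ∑ i, a i • u (c i, n i)‖ ≤
      10 * (∑ i, (ν i).real Set.univ) * ((κ + 1) / Real.sin θ) * (k + M) * η := by
  rcases isEmpty_or_nonempty I with _ | ⟨⟨i₀⟩⟩
  · simp
  have hM : 0 ≤ M := (norm_nonneg _).trans (hub i₀)
  have hosc : ∀ i, ∀ᵐ p ∂(ν i), ‖u p - u (c i, n i)‖ ≤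
      k * ((κ + 1) * η + 6 * √2 * κ * η / Real.sin θ) := fun i => by
    filter_upwards [hsupp i] with p hp
    exact (hul p i).trans (by gcongr; exacts [hp.1, hp.2])
  have hradii := add_one_add_six_mul_sqrt_two_mul_div_le hκ hθ (Real.sin_le_one θ)
  have hdefect : 3 * κ ≤ 10 * ((κ + 1) / Real.sin θ) := by
    linarith [le_div_self (by positivity : 0 ≤ κ + 1) hθ (Real.sin_le_one θ)]
  calc ‖(∑ i, ∫ p, u p ∂(ν i)) - ∑ i, a i • u (c i, n i)‖
      ≤ (k * ((κ + 1) * η + 6 * √2 * κ * η / Real.sin θ) + 3 * κ * η * M) *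
          ∑ i, (ν i).real Set.univ :=
        norm_sum_integral_sub_sum_smul_le Finset.univ (fun i _ => hu i) (fun i _ => hosc i)
          (fun i _ => hub i) (fun i _ => (haA i).trans_eq (by ring))
    _ = (k * (κ + 1 + 6 * √2 * κ / Real.sin θ) + 3 * κ * M) * η *
          ∑ i, (ν i).real Set.univ := by ring
    _ ≤ (k * (10 * ((κ + 1) / Real.sin θ)) + 10 * ((κ + 1) / Real.sin θ) * M) * η *
          ∑ i, (ν i).real Set.univ := by gcongr
    _ = 10 * (∑ i, (ν i).real Set.univ) * ((κ + 1) / Real.sin θ) * (k + M) * η := by ring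

/-- Global form of Theorem 1: summing the per-face estimates over a finite index set `I`
(faces of the mesh / patches partitioning the surface `S`), we get
`|μ_S(u) - μ_X(u)| ≤ 10 · a(S) · ((κ+1)/sin θ) · (k + M) · η`. -/
theorem statement2
    {I : Type*} [Fintype I]
    (ν : I → Measure (E3 × S2)) [∀ i, IsFiniteMeasure (ν i)]
    (c : I → E3) (n : I → S2) (a : I → ℝ) (ha : ∀ i, 0 ≤ a i)
    (M k : ℝ) (hM : 0 ≤ M) (hk : 0 ≤ k)
    (u : E3 × S2 → ℝ)
    (hub : ∀ p : E3 × S2, |u p| ≤ M)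
    (hul : ∀ p q : E3 × S2,
      |u p - u q| ≤ k * (‖p.1 - q.1‖ + ‖(p.2 : E3) - (q.2 : E3)‖))
    (κ η θ : ℝ)
    (hκ : 0 ≤ κ) (hη : 0 ≤ η) (hθ : θ ∈ Set.Ioc (0 : ℝ) (Real.pi / 2))
    (hsupp : ∀ i, (ν i) {p : E3 × S2 |
      ¬ (‖p.1 - c i‖ ≤ (κ + 1) * η ∧
          ‖(p.2 : E3) - ((n i) : E3)‖ ≤ 6 * Real.sqrt 2 * κ * η / Real.sin θ)} = 0)
    (haA : ∀ i, |a i - ((ν i) Set.univ).toReal| ≤ 3 * ((ν i) Set.univ).toReal * κ * η) :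
    |(∑ i, ∫ p, u p ∂(ν i)) - ∑ i, a i * u (c i, n i)| ≤
      10 * (∑ i, ((ν i) Set.univ).toReal) * ((κ + 1) / Real.sin θ) * (k + M) * η := by
  simp only [← Subtype.dist_eq, ← dist_eq_norm] at hul hsupp
  have hcont : Continuous u := continuous_of_dist_le_mul_dist_add_dist hk hul
  exact statement2_general (fun _ => hcont.aestronglyMeasurable) (fun _ => hub _) hk
    (fun p _ => hul p _) hκ hη
    (Real.sin_pos_of_mem_Ioo ⟨hθ.1, hθ.2.trans_lt (half_lt_self Real.pi_pos)⟩) hsupp haA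
end

section
/- Let U, V ⊆ ℝ² be open sets, let f : U → ℝ³ be continuously differentiable with ∂₁f(p) × ∂₂f(p) ≠ 0 for all p ∈ U (an immersion), and let φ : V → U be a continuously differentiable bijection with continuously differentiable inverse and det(Dφ(q)) > 0 for all q ∈ V. Set g = f ∘ φ, and for an immersed parameterization h let ν_h = (∂₁h × ∂₂h)/‖∂₁h × ∂₂h‖ denote its unit normal field. Then for every bounded continuous function u : ℝ³ × S² → ℝ for which p ↦ u(f(p), ν_f(p))·‖∂₁f(p) × ∂₂f(p)‖ is Lebesgue integrable on U, one has ∫_V u(g(q), ν_g(q)) ‖∂₁g(q) × ∂₂g(q)‖ dq = ∫_U u(f(p), ν_f(p)) ‖∂₁f(p) × ∂₂f(p)‖ dp. -/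
open MeasureTheory

local notation "E2" => EuclideanSpace ℝ (Fin 2)
local notation "E3" => EuclideanSpace ℝ (Fin 3)
local notation "S2" => Metric.sphere (0 : EuclideanSpace ℝ (Fin 3)) 1

/-- The cross product on `ℝ³ = EuclideanSpace ℝ (Fin 3)`. -/
noncomputable def cross3 (v w : EuclideanSpace ℝ (Fin 3)) : EuclideanSpace ℝ (Fin 3) :=
  (EuclideanSpace.equiv (Fin 3) ℝ).symm
    (crossProduct ((EuclideanSpace.equiv (Fin 3) ℝ) v) ((EuclideanSpace.equiv (Fin 3) ℝ) w))

/-- Normalization of a nonzero vector of `ℝ³` to a point of the unit sphere `S²`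
(a junk value on `S²` is returned for `v = 0`). -/
noncomputable def toS2 (v : EuclideanSpace ℝ (Fin 3)) :
    Metric.sphere (0 : EuclideanSpace ℝ (Fin 3)) 1 :=
  letI := Classical.dec (v = 0)
  if h : v = 0 then
    ⟨EuclideanSpace.single 0 1, by simp [mem_sphere_zero_iff_norm]⟩
  else
    ⟨‖v‖⁻¹ • v, by
      simp [mem_sphere_zero_iff_norm, norm_smul,
        inv_mul_cancel₀ (norm_ne_zero_iff.mpr h)]⟩

/-- First partial derivative of a map defined on `ℝ²`. -/
noncomputable def pd1 {F : Type*} [NormedAddCommGroup F] [NormedSpace ℝ F]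
    (h : EuclideanSpace ℝ (Fin 2) → F) (p : EuclideanSpace ℝ (Fin 2)) : F :=
  fderiv ℝ h p (EuclideanSpace.single 0 1)

/-- Second partial derivative of a map defined on `ℝ²`. -/
noncomputable def pd2 {F : Type*} [NormedAddCommGroup F] [NormedSpace ℝ F]
    (h : EuclideanSpace ℝ (Fin 2) → F) (p : EuclideanSpace ℝ (Fin 2)) : F :=
  fderiv ℝ h p (EuclideanSpace.single 1 1)

/-!
The integrand of a varifold is a positively homogeneous function, of degree one, of the vector
`∂₁h × ∂₂h`. Reparameterizing by `φ` multiplies that vector by `det Dφ`, so for `det Dφ ≥ 0` the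
integrand is multiplied by the Jacobian factor of the change of variables formula. Where
`det Dφ = 0` the normal is lost, but the integrand vanishes there.
-/

theorem cross3_smul_add_smul (a b c d : ℝ) (v w : E3) :
    cross3 (a • v + b • w) (c • v + d • w) = (a * d - b * c) • cross3 v w := by
  ext i
  fin_cases i <;> simp [cross3, cross_apply] <;> ring

theorem euclideanSpace_fin_two_eq_smul_add_smul (x : E2) :
    x = x 0 • EuclideanSpace.single 0 1 + x 1 • EuclideanSpace.single 1 1 := by
  ext i
  fin_cases i <;> simp

theorem linearMap_det_euclideanSpace_fin_two (A : E2 →ₗ[ℝ] E2) :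
    LinearMap.det A =
      A (EuclideanSpace.single 0 1) 0 * A (EuclideanSpace.single 1 1) 1 -
        A (EuclideanSpace.single 0 1) 1 * A (EuclideanSpace.single 1 1) 0 := by
  rw [← LinearMap.det_toMatrix (EuclideanSpace.basisFun (Fin 2) ℝ).toBasis, Matrix.det_fin_two]
  simp [LinearMap.toMatrix_apply, mul_comm]

theorem cross3_comp_single (L : E2 →ₗ[ℝ] E3) (A : E2 →ₗ[ℝ] E2) :
    cross3 (L (A (EuclideanSpace.single 0 1))) (L (A (EuclideanSpace.single 1 1))) =
      LinearMap.det A •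
        cross3 (L (EuclideanSpace.single 0 1)) (L (EuclideanSpace.single 1 1)) := by
  have map_eq (x : E2) :
      L x = x 0 • L (EuclideanSpace.single 0 1) + x 1 • L (EuclideanSpace.single 1 1) := by
    conv_lhs => rw [euclideanSpace_fin_two_eq_smul_add_smul x, map_add, map_smul, map_smul]
  rw [map_eq (A (EuclideanSpace.single 0 1)), map_eq (A (EuclideanSpace.single 1 1)),
    cross3_smul_add_smul, linearMap_det_euclideanSpace_fin_two]

theorem toS2_smul_of_pos {c : ℝ} (hc : 0 < c) (v : E3) : toS2 (c • v) = toS2 v := by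
  by_cases hv : v = 0
  · rw [hv, smul_zero]
  · have inv_norm_smul : ‖c • v‖⁻¹ • c • v = ‖v‖⁻¹ • v := by
      rw [norm_smul, Real.norm_of_nonneg hc.le, smul_smul, mul_inv_rev,
        inv_mul_cancel_right₀ hc.ne']
    simpa only [toS2, hv, smul_ne_zero hc.ne' hv, dif_neg, not_false_eq_true, Subtype.mk.injEq]
      using inv_norm_smul

/-- The vector `∂₁h × ∂₂h`: its direction is the unit normal `ν_h` and its length is the area
density of the parameterized surface `h`. -/
noncomputable def areaVector (h : E2 → E3) (p : E2) : E3 :=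
  cross3 (pd1 h p) (pd2 h p)

theorem areaVector_comp {f : E2 → E3} {φ : E2 → E2} {q : E2}
    (hf : DifferentiableAt ℝ f (φ q)) (hφ : DifferentiableAt ℝ φ q) :
    areaVector (f ∘ φ) q = (fderiv ℝ φ q).det • areaVector f (φ q) := by
  simp only [areaVector, pd1, pd2, fderiv_comp q hf hφ]
  exact cross3_comp_single (fderiv ℝ f (φ q)) (fderiv ℝ φ q)

section VarifoldIntegrand

variable {G : Type*} [NormedAddCommGroup G] [NormedSpace ℝ G] (u : E3 × S2 → G)

/-- The function on the parameter domain whose integral is `μ_S(u)`, for the surface `S`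
parameterized by `h`. -/
noncomputable def varifoldIntegrand (h : E2 → E3) (p : E2) : G :=
  ‖areaVector h p‖ • u (h p, toS2 (areaVector h p))

theorem norm_smul_apply_toS2_smul {c : ℝ} (hc : 0 ≤ c) (x v : E3) :
    ‖c • v‖ • u (x, toS2 (c • v)) = c • ‖v‖ • u (x, toS2 v) := by
  rcases hc.eq_or_lt with rfl | hc_pos
  · simp only [zero_smul, norm_zero]
  · rw [toS2_smul_of_pos hc_pos, norm_smul, Real.norm_of_nonneg hc, mul_smul]

theorem varifoldIntegrand_comp {f : E2 → E3} {φ : E2 → E2} {q : E2}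
    (hf : DifferentiableAt ℝ f (φ q)) (hφ : DifferentiableAt ℝ φ q)
    (hdet : 0 ≤ (fderiv ℝ φ q).det) :
    varifoldIntegrand u (f ∘ φ) q = |(fderiv ℝ φ q).det| • varifoldIntegrand u f (φ q) := by
  rw [varifoldIntegrand, areaVector_comp hf hφ, norm_smul_apply_toS2_smul u hdet,
    abs_of_nonneg hdet, varifoldIntegrand, Function.comp_apply]

theorem statement9_general {U V : Set E2} (hV : MeasurableSet V) {f : E2 → E3} {φ : E2 → E2}
    (hf : ∀ p ∈ U, DifferentiableAt ℝ f p) (hφ : ∀ q ∈ V, DifferentiableAt ℝ φ q)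
    (hbij : Set.BijOn φ V U) (hdet : ∀ q ∈ V, 0 ≤ (fderiv ℝ φ q).det)
    (hint : IntegrableOn (varifoldIntegrand u f) U) :
    IntegrableOn (varifoldIntegrand u (f ∘ φ)) V ∧
      ∫ q in V, varifoldIntegrand u (f ∘ φ) q = ∫ p in U, varifoldIntegrand u f p := by
  have hφ' : ∀ q ∈ V, HasFDerivWithinAt φ (fderiv ℝ φ q) V q := fun q hq =>
    (hφ q hq).hasFDerivAt.hasFDerivWithinAt
  have integrand_eq : Set.EqOn (varifoldIntegrand u (f ∘ φ))
      (fun q => |(fderiv ℝ φ q).det| • varifoldIntegrand u f (φ q)) V := fun q hq =>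
    varifoldIntegrand_comp u (hf _ (hbij.mapsTo hq)) (hφ q hq) (hdet q hq)
  rw [← hbij.image_eq] at hint ⊢
  rw [integrableOn_congr_fun integrand_eq hV, setIntegral_congr_fun hV integrand_eq]
  exact ⟨(integrableOn_image_iff_integrableOn_abs_det_fderiv_smul volume hV hφ' hbij.injOn _).1
      hint,
    (integral_image_eq_integral_abs_det_fderiv_smul volume hV hφ' hbij.injOn _).symm⟩

end VarifoldIntegrand

/-- Invariance of the varifold of a parameterized surface under orientation-preserving
reparameterization: for an immersion `f` on `U` and a `C¹` diffeomorphism `φ : V → U` with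
positive Jacobian determinant, the varifold integrals `μ_S(u)` computed from `f` on `U` and
from `g = f ∘ φ` on `V` agree, for any bounded continuous test function `u` on `ℝ³ × S²`
making the integrand for `f` integrable. -/
theorem statement9
    (U V : Set E2) (hU : IsOpen U) (hV : IsOpen V)
    (f : E2 → E3) (hf : ContDiffOn ℝ 1 f U)
    (himm : ∀ p ∈ U, cross3 (pd1 f p) (pd2 f p) ≠ 0)
    (φ ψ : E2 → E2) (hφ : ContDiffOn ℝ 1 φ V)
    (hbij : Set.BijOn φ V U)
    (hψ : ContDiffOn ℝ 1 ψ U)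
    (hinv1 : ∀ q ∈ V, ψ (φ q) = q) (hinv2 : ∀ p ∈ U, φ (ψ p) = p)
    (hdet : ∀ q ∈ V, 0 < LinearMap.det ((fderiv ℝ φ q) : E2 →ₗ[ℝ] E2))
    (u : E3 × S2 → ℝ) (hu : Continuous u) (hub : ∃ C, ∀ p, |u p| ≤ C)
    (hint : IntegrableOn
      (fun p => u (f p, toS2 (cross3 (pd1 f p) (pd2 f p))) * ‖cross3 (pd1 f p) (pd2 f p)‖)
      U) :
    (∫ q in V, u ((f ∘ φ) q, toS2 (cross3 (pd1 (f ∘ φ) q) (pd2 (f ∘ φ) q))) *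
        ‖cross3 (pd1 (f ∘ φ) q) (pd2 (f ∘ φ) q)‖) =
      ∫ p in U, u (f p, toS2 (cross3 (pd1 f p) (pd2 f p))) *
        ‖cross3 (pd1 f p) (pd2 f p)‖ := by
  simp only [mul_comm (u _), ← smul_eq_mul] at hint ⊢
  exact (statement9_general u hV.measurableSet
    (fun _ hp => (hf.differentiableOn one_ne_zero).differentiableAt (hU.mem_nhds hp))
    (fun _ hq => (hφ.differentiableOn one_ne_zero).differentiableAt (hV.mem_nhds hq))
    hbij (fun q hq => (hdet q hq).le) hint).2
end
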